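/- For every k ∈ ℕ: (a) the set {β ∈ (1,2] : 𝐔_β contains a sequence of smallest period k} equals the half-open interval (β_k, 2]; and (b) if k ≥ 2, then the quasi-greedy β_k-expansion of 1 is periodic with period k, i.e. δ_{i+k}(β_k) = δ_i(β_k) for all i ≥ 1. -/

import Mathlib

open Filter Set

noncomputable section

namespace FatSierpinski

/-- The digit set Ω = {(0,0),(1,0),(0,1)} ⊆ ℝ². -/
def OmegaR : Set (ℝ × ℝ) := {(0, 0), (1, 0), (0, 1)}

/-- The fat Sierpinski gasket `S_β` (sequences are 0-indexed: `d i` is the digit d_{i+1}). -/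
def Sfat (β : ℝ) : Set (ℝ × ℝ) :=
  {x | ∃ d : ℕ → ℝ × ℝ, (∀ i, d i ∈ OmegaR) ∧ x = ∑' i : ℕ, (β ^ (i + 1))⁻¹ • d i}

/-- The convex hull `Δ_β` of `S_β`. -/
def Delta (β : ℝ) : Set (ℝ × ℝ) := convexHull ℝ (Sfat β)

/-- The map `f_d(x) = (x + d)/β`. -/
def fmap (β : ℝ) (d : ℝ × ℝ) (x : ℝ × ℝ) : ℝ × ℝ := β⁻¹ • (x + d)

/-- The overlap region `O_β = ⋃_{c ≠ d ∈ Ω} f_c(Δ_β) ∩ f_d(Δ_β)`. -/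
def Ofat (β : ℝ) : Set (ℝ × ℝ) :=
  ⋃ c ∈ OmegaR, ⋃ d ∈ OmegaR, ⋃ (_ : c ≠ d), (fmap β c '' Delta β) ∩ (fmap β d '' Delta β)

/-- The univoque set of codings `𝐔_β`. -/
def Ufat (β : ℝ) : Set (ℕ → ℝ × ℝ) :=
  {d | (∀ i, d i ∈ OmegaR) ∧
    ∀ n : ℕ, (∑' i : ℕ, (β ^ (i + 1))⁻¹ • d (n + i)) ∉ Ofat β}

/-- `d` has smallest period `k`. -/
def SmallestPeriod {α : Type*} (d : ℕ → α) (k : ℕ) : Prop :=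
  0 < k ∧ (∀ i, d (i + k) = d i) ∧ ∀ j, 0 < j → j < k → ∃ i, d (i + j) ≠ d i

/-- The critical base `β_k`. -/
def betaK (k : ℕ) : ℝ :=
  sInf {β : ℝ | β ∈ Set.Ioc (1 : ℝ) 2 ∧ ∃ d ∈ Ufat β, SmallestPeriod d k}

/-- Strict lexicographic order on sequences. -/
def seqLT {α : Type*} [Preorder α] (a b : ℕ → α) : Prop :=
  ∃ n, (∀ i < n, a i = b i) ∧ a n < b n

/-- Weak lexicographic order on sequences. -/
def seqLE {α : Type*} [Preorder α] (a b : ℕ → α) : Prop :=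
  seqLT a b ∨ a = b

/-- `a` is a 0-1 sequence. -/
def IsBinary (a : ℕ → ℕ) : Prop := ∀ i, a i ≤ 1

/-- `a` does not end with `0^∞`. -/
def NotEndInZeros (a : ℕ → ℕ) : Prop := ∀ N, ∃ i, N ≤ i ∧ a i ≠ 0

/-- `∑_{i=1}^∞ a_i β^{-i} = 1` (0-indexed: `a i` is a_{i+1}). -/
def SumsToOne (β : ℝ) (a : ℕ → ℕ) : Prop :=
  ∑' i : ℕ, (a i : ℝ) / β ^ (i + 1) = 1

/-- `a` is the quasi-greedy β-expansion of 1: the lexicographically largest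
binary sequence not ending in `0^∞` whose value in base β is 1. -/
def IsQuasiGreedy (β : ℝ) (a : ℕ → ℕ) : Prop :=
  IsBinary a ∧ NotEndInZeros a ∧ SumsToOne β a ∧
    ∀ b : ℕ → ℕ, IsBinary b → NotEndInZeros b → SumsToOne β b → seqLE b a

/-- `w⁺`: replace the final digit 0 of a block by 1. -/
def plusBlock (w : List ℕ) : List ℕ := w.dropLast ++ [1]

/-- `Θ` flips the outer digits of every consecutive triple
(000↦101, 001↦100, 100↦001, 101↦000). -/
def thetaBlock (w : List ℕ) : List ℕ :=
  w.mapIdx fun i x => if i % 3 = 1 then x else 1 - x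

/-- `tB n` is the block `t_{n+1}`: `t_1 = 100`, `t_{n+1} = t_n⁺ Θ(t_n⁺)`. -/
def tB : ℕ → List ℕ
  | 0 => [1, 0, 0]
  | n + 1 => plusBlock (tB n) ++ thetaBlock (plusBlock (tB n))

/-- The sequence `u w^∞` (the block `u` followed by `w` repeated forever). -/
def prefixPeriodic (u w : List ℕ) : ℕ → ℕ := fun i =>
  if i < u.length then u.getD i 0 else w.getD ((i - u.length) % w.length) 0

/-- The periodic sequence `w^∞`. -/
def periodicSeq (w : List ℕ) : ℕ → ℕ := fun i => w.getD (i % w.length) 0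

/-- The componentwise limit `λ = 101001000101…` of the blocks `t_n`
(the digit `λ_{i+1}` has stabilized in `t_{i+2} = tB (i+1)`). -/
def lamSeq : ℕ → ℕ := fun i => (tB (i + 1)).getD i 0

/-- `β_c` is the unique base in (1,2] with `∑ λ_i β^{-i} = 1`. -/
def IsBetaC (β : ℝ) : Prop := β ∈ Set.Ioc (1 : ℝ) 2 ∧ SumsToOne β lamSeq

/-- The sequence `t_{n+2}⁺ (Θ(t_{n+2}))^∞`, the quasi-greedy expansion of 1 for `β̂_n`. -/
def hatSeq (n : ℕ) : ℕ → ℕ :=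
  prefixPeriodic (plusBlock (tB (n + 1))) (thetaBlock (tB (n + 1)))

/-- The Sharkovskii ordering `k ⊳ ℓ` on positive integers. -/
def Sharkovskii (k l : ℕ) : Prop :=
  ∃ a b c d : ℕ, k = 2 ^ a * (2 * b + 1) ∧ l = 2 ^ c * (2 * d + 1) ∧ k ≠ l ∧
    ((1 ≤ b ∧ d = 0) ∨ (1 ≤ b ∧ 1 ≤ d ∧ (a < c ∨ (a = c ∧ b < d))) ∨
      (b = 0 ∧ d = 0 ∧ c < a))

/-- The digit set Ω as pairs of naturals (for combinatorial statements). -/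
def OmegaD : Set (ℕ × ℕ) := {(0, 0), (1, 0), (0, 1)}

/-- The periodic extension `(d_1 … d_k)^∞` of a block. -/
def cyc (d : List (ℕ × ℕ)) : ℕ → ℕ × ℕ := fun i => d.getD (i % d.length) (0, 0)

/-- Strict lexicographic order on lists. -/
def listLT (u v : List ℕ) : Prop := List.Lex (· < ·) u v

/-- Weak lexicographic order on lists. -/
def listLE (u v : List ℕ) : Prop := listLT u v ∨ u = v

/-- The first components `d_1¹ … d_k¹` of a block over Ω. -/
def comp1 (d : List (ℕ × ℕ)) : List ℕ := d.map Prod.fst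

/-- The second components `d_1² … d_k²` of a block over Ω. -/
def comp2 (d : List (ℕ × ℕ)) : List ℕ := d.map Prod.snd

/-- The digits `(1 - d_1⁺) … (1 - d_k⁺)` where `d⁺ = d¹ + d²`. -/
def comp3 (d : List (ℕ × ℕ)) : List ℕ := d.map fun x => 1 - x.1 - x.2

/-- Cyclic shift of a list by `j`. -/
def rot {α : Type*} (j : ℕ) (l : List α) : List α := l.drop j ++ l.take j

/-- `d` is a representation of the binary block `a`. -/
def IsRepresentation (a : List ℕ) (d : List (ℕ × ℕ)) : Prop :=
  d.length = a.length ∧ (∀ x ∈ d, x ∈ OmegaD) ∧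
  SmallestPeriod (cyc d) a.length ∧
  comp1 d = a ∧ listLE (comp3 d) (comp2 d) ∧ listLE (comp2 d) a ∧
  ∀ j < a.length,
    listLE (comp1 (rot j d)) a ∧ listLE (comp2 (rot j d)) a ∧ listLE (comp3 (rot j d)) a

/-- A binary block is admissible if it has a representation. -/
def IsAdmissible (a : List ℕ) : Prop := ∃ d, IsRepresentation a d

/-- The `i`-th consecutive triple of a block (0-indexed). -/
def tripleAt (a : List ℕ) (i : ℕ) : List ℕ :=
  [a.getD (3 * i) 0, a.getD (3 * i + 1) 0, a.getD (3 * i + 2) 0]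

/-- The edges of the directed graph on {000, 001, 100, 101} defining the subshift `X`. -/
def XEdge (u v : List ℕ) : Prop :=
  (u, v) ∈ ({([1,0,1], [0,0,1]), ([1,0,1], [0,0,0]), ([0,0,1], [0,0,0]),
             ([0,0,0], [1,0,1]), ([0,0,0], [1,0,0]), ([1,0,0], [1,0,1])} :
      Set (List ℕ × List ℕ))

/-!
Identify `Ω` with the three vertices of the unit triangle, so that a coding is a word over three
letters, and read off barycentric coordinates: the `c`-th coordinate of a point of the gasket is the
value in base `β` of the 0-1 sequence marking the occurrences of the letter `c` in its coding.
A word is thus univoque if and only if, after every place where the letter is not `c`, the sequence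
marking the later occurrences of `c` has value less than `1`. These values decrease with `β` and
depend continuously on it, and a periodic word has only finitely many tails, so the set of bases is
an up-set without least element.

A word of smallest period `k ≥ 2` has a letter `c` preceded by a different letter; as `c` recurs
after `k` places, its value there is at least `2 / β ^ (k + 1)`, which keeps `β_k` away from `1`.
There are only finitely many words of period `k`, so one of them is univoque in bases arbitrarily
close to `β_k` from above; in base `β_k` all its values are at most `1`, and one of them equals
`1` since the word is not univoque there. The corresponding 0-1 sequence is a periodic expansion
of `1` whose tails after a digit `0` have value at most `1`, and this makes it quasi-greedy.
-/

open scoped Topology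
open Bornology (IsBounded)

section Order

theorem eq_Ioc_csInf_of_no_least {α : Type*} [ConditionallyCompleteLinearOrder α] {s : Set α}
    {b : α} (hne : s.Nonempty) (hbdd : BddBelow s) (hsb : s ⊆ Iic b)
    (hup : ∀ x ∈ s, ∀ y, x ≤ y → y ≤ b → y ∈ s) (hleast : ∀ x ∈ s, ∃ y ∈ s, y < x) :
    s = Ioc (sInf s) b := by
  ext y
  refine ⟨fun hy ↦ ⟨?_, hsb hy⟩, fun ⟨hy, hyb⟩ ↦ ?_⟩
  · obtain ⟨x, hx, hxy⟩ := hleast y hy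
    exact (csInf_le hbdd hx).trans_lt hxy
  · obtain ⟨x, hx, hxy⟩ := exists_lt_of_csInf_lt hne hy
    exact hup x hx y hxy.le hyb

theorem seqLT_iff_toLex_lt {α : Type*} [Preorder α] {a b : ℕ → α} :
    seqLT a b ↔ toLex a < toLex b := Iff.rfl

theorem seqLE_iff_toLex_le {α : Type*} [LinearOrder α] {a b : ℕ → α} :
    seqLE a b ↔ toLex a ≤ toLex b := by
  rw [le_iff_lt_or_eq, toLex_inj]
  rfl

end Order

section ExpansionValue

variable {E : Type*} [NormedAddCommGroup E] [NormedSpace ℝ E] {β γ : ℝ}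

/-- The value `∑_{i ≥ 1} f_i / β^i` in base `β` of a sequence of digits in a normed space, with
`f i` standing for the digit `f_{i+1}`. Vector digits give points of the gasket, real digits their
coordinates. -/
def expansionValue (β : ℝ) (f : ℕ → E) : E := ∑' i, (β ^ (i + 1))⁻¹ • f i

theorem hasSum_inv_pow_succ (hβ : 1 < β) :
    HasSum (fun i : ℕ ↦ (β ^ (i + 1))⁻¹) (β - 1)⁻¹ := by
  have hβ₀ : β ≠ 0 := by positivity
  have hgeom := (hasSum_geometric_of_lt_one (by positivity) (inv_lt_one_of_one_lt₀ hβ)).mul_left β⁻¹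
  rw [← mul_inv, mul_sub, mul_one, mul_inv_cancel₀ hβ₀] at hgeom
  simpa only [pow_succ', mul_inv, inv_pow] using hgeom

theorem summable_expansionValue [CompleteSpace E] (hβ : 1 < β) {f : ℕ → E}
    (hf : IsBounded (range f)) : Summable fun i ↦ (β ^ (i + 1))⁻¹ • f i := by
  obtain ⟨C, hC⟩ := hf.exists_norm_le
  refine .of_norm_bounded ((hasSum_inv_pow_succ hβ).summable.mul_right C) fun i ↦ ?_
  rw [norm_smul, Real.norm_of_nonneg (by positivity)]
  gcongr
  exact hC _ (mem_range_self i)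

theorem hasSum_expansionValue [CompleteSpace E] (hβ : 1 < β) {f : ℕ → E}
    (hf : IsBounded (range f)) :
    HasSum (fun i ↦ (β ^ (i + 1))⁻¹ • f i) (expansionValue β f) :=
  (summable_expansionValue hβ hf).hasSum

theorem expansionValue_const (hβ : 1 < β) (v : E) :
    expansionValue β (fun _ ↦ v) = (β - 1)⁻¹ • v :=
  ((hasSum_inv_pow_succ hβ).smul_const v).tsum_eq

theorem expansionValue_eq_sum_add [CompleteSpace E] (hβ : 1 < β) {f : ℕ → E}
    (hf : IsBounded (range f)) (n : ℕ) :
    expansionValue β f = ∑ i ∈ Finset.range n, (β ^ (i + 1))⁻¹ • f i +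
      (β ^ n)⁻¹ • expansionValue β (fun i ↦ f (n + i)) := by
  rw [expansionValue, ← (summable_expansionValue hβ hf).sum_add_tsum_nat_add n, expansionValue,
    ← tsum_const_smul'']
  congr! 3 with i
  rw [smul_smul, ← mul_inv, ← pow_add, add_comm i n, add_assoc]

theorem smul_expansionValue [CompleteSpace E] (hβ : 1 < β) {f : ℕ → E}
    (hf : IsBounded (range f)) :
    β • expansionValue β f = f 0 + expansionValue β (fun i ↦ f (1 + i)) := by
  have hβ₀ : β ≠ 0 := by positivity
  rw [expansionValue_eq_sum_add hβ hf 1, Finset.sum_range_one, zero_add, pow_one, smul_add,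
    smul_inv_smul₀ hβ₀, smul_inv_smul₀ hβ₀]

theorem continuousAt_expansionValue [CompleteSpace E] (hβ : 1 < β) {f : ℕ → E}
    (hf : IsBounded (range f)) : ContinuousAt (fun γ ↦ expansionValue γ f) β := by
  obtain ⟨r, hr, hrβ⟩ := exists_between hβ
  obtain ⟨C, hC⟩ := hf.exists_norm_le
  refine ContinuousOn.continuousAt (s := Ici r) ?_ (Ici_mem_nhds hrβ)
  refine continuousOn_tsum (fun i ↦ ?_) ((hasSum_inv_pow_succ hr).summable.mul_right C)
    fun i γ hγ ↦ ?_
  · refine ((continuousOn_pow _).inv₀ fun γ hγ ↦ ?_).smul continuousOn_const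
    exact pow_ne_zero _ ((zero_lt_one.trans hr).trans_le hγ).ne'
  · have hγ₀ : 0 < γ := (zero_lt_one.trans hr).trans_le hγ
    rw [norm_smul, Real.norm_of_nonneg (by positivity)]
    gcongr
    exacts [hγ, hC _ (mem_range_self i)]

theorem expansionValue_nonneg (hβ : 0 ≤ β) {f : ℕ → ℝ} (hf : ∀ i, 0 ≤ f i) :
    0 ≤ expansionValue β f :=
  tsum_nonneg fun i ↦ smul_nonneg (by positivity) (hf i)

theorem expansionValue_lt_expansionValue (hβ : 1 < β) {f g : ℕ → ℝ} (hf : IsBounded (range f))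
    (hg : IsBounded (range g)) (hfg : ∀ i, f i ≤ g i) {m : ℕ} (hm : f m < g m) :
    expansionValue β f < expansionValue β g := by
  refine Summable.tsum_lt_tsum (i := m) (fun i ↦ ?_) ?_ (summable_expansionValue hβ hf)
    (summable_expansionValue hβ hg)
  · exact smul_le_smul_of_nonneg_left (hfg i) (by positivity)
  · exact smul_lt_smul_of_pos_left hm (by positivity)

theorem expansionValue_anti_base (hβ : 1 < β) (hβγ : β ≤ γ) {f : ℕ → ℝ} (hf : IsBounded (range f))
    (hf₀ : ∀ i, 0 ≤ f i) : expansionValue γ f ≤ expansionValue β f := by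
  refine Summable.tsum_le_tsum (fun i ↦ ?_) (summable_expansionValue (hβ.trans_le hβγ) hf)
    (summable_expansionValue hβ hf)
  refine smul_le_smul_of_nonneg_right ?_ (hf₀ i)
  gcongr

end ExpansionValue

section QuasiGreedy

variable {β : ℝ} {a b : ℕ → ℕ}

theorem IsBinary.isBounded_range_cast (ha : IsBinary a) : IsBounded (range fun i ↦ (a i : ℝ)) :=
  (Metric.isBounded_Icc 0 1).subset <| range_subset_iff.2 fun i ↦
    ⟨Nat.cast_nonneg _, mod_cast ha i⟩

theorem sumsToOne_iff : SumsToOne β a ↔ expansionValue β (fun i ↦ (a i : ℝ)) = 1 := by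
  simp only [SumsToOne, expansionValue, div_eq_inv_mul, smul_eq_mul]

theorem NotEndInZeros.expansionValue_tail_pos (hβ : 1 < β) (ha : IsBinary a)
    (ha₀ : NotEndInZeros a) (n : ℕ) : 0 < expansionValue β (fun i ↦ (a (n + i) : ℝ)) := by
  obtain ⟨m, hnm, hm⟩ := ha₀ n
  obtain ⟨j, rfl⟩ := Nat.exists_eq_add_of_le hnm
  have htail : IsBinary fun i ↦ a (n + i) := fun i ↦ ha _
  refine (expansionValue_nonneg (f := 0) (by positivity) fun _ ↦ le_rfl).trans_lt ?_
  exact expansionValue_lt_expansionValue hβ (by simp) htail.isBounded_range_cast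
    (fun i ↦ Nat.cast_nonneg _) (m := j) (by simpa [Nat.pos_iff_ne_zero] using hm)

theorem expansionValue_lt_of_seqLT (hβ : 1 < β) (ha : IsBinary a) (hb : IsBinary b)
    (hb₀ : NotEndInZeros b)
    (htail : ∀ n, a n = 0 → expansionValue β (fun i ↦ (a (n + 1 + i) : ℝ)) ≤ 1)
    (hab : seqLT a b) :
    expansionValue β (fun i ↦ (a i : ℝ)) < expansionValue β (fun i ↦ (b i : ℝ)) := by
  obtain ⟨m, hagree, hm⟩ := hab
  have hbm : b m = 1 := (hb m).antisymm (Nat.one_le_of_lt hm)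
  have ham : a m = 0 := by omega
  have hsum : ∑ i ∈ Finset.range m, (β ^ (i + 1))⁻¹ • (a i : ℝ) =
      ∑ i ∈ Finset.range m, (β ^ (i + 1))⁻¹ • (b i : ℝ) :=
    Finset.sum_congr rfl fun i hi ↦ by rw [hagree i (Finset.mem_range.1 hi)]
  rw [expansionValue_eq_sum_add hβ ha.isBounded_range_cast (m + 1),
    expansionValue_eq_sum_add hβ hb.isBounded_range_cast (m + 1),
    Finset.sum_range_succ, Finset.sum_range_succ, hsum, ham, hbm, add_assoc, add_assoc,
    add_lt_add_iff_left, ← smul_add, ← smul_add, Nat.cast_zero, zero_add, Nat.cast_one]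
  refine smul_lt_smul_of_pos_left ((htail m ham).trans_lt ?_) (by positivity)
  exact lt_add_of_pos_right 1 (hb₀.expansionValue_tail_pos hβ hb (m + 1))

theorem isQuasiGreedy_of_expansionValue_tail_le_one (hβ : 1 < β) (ha : IsBinary a)
    (ha₀ : NotEndInZeros a) (hsum : SumsToOne β a)
    (htail : ∀ n, a n = 0 → expansionValue β (fun i ↦ (a (n + 1 + i) : ℝ)) ≤ 1) :
    IsQuasiGreedy β a := by
  refine ⟨ha, ha₀, hsum, fun b hb hb₀ hbsum ↦ seqLE_iff_toLex_le.2 <| le_of_not_gt fun hab ↦ ?_⟩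
  have hlt := expansionValue_lt_of_seqLT hβ ha hb hb₀ htail (seqLT_iff_toLex_lt.2 hab)
  rw [sumsToOne_iff.1 hsum, sumsToOne_iff.1 hbsum] at hlt
  exact hlt.false

theorem IsQuasiGreedy.unique (ha : IsQuasiGreedy β a) (hb : IsQuasiGreedy β b) : a = b := by
  obtain ⟨ha₁, ha₂, ha₃, hamax⟩ := ha
  obtain ⟨hb₁, hb₂, hb₃, hbmax⟩ := hb
  exact toLex.injective <| (seqLE_iff_toLex_le.1 (hbmax a ha₁ ha₂ ha₃)).antisymm
    (seqLE_iff_toLex_le.1 (hamax b hb₁ hb₂ hb₃))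

theorem notEndInZeros_of_periodic {k m : ℕ} (hk : 0 < k) (ha : Function.Periodic a k)
    (hm : a m ≠ 0) : NotEndInZeros a := fun N ↦
  ⟨m + N * k, le_add_left (Nat.le_mul_of_pos_right N hk), (ha.nat_mul N m).trans_ne hm⟩

end QuasiGreedy

section Barycentric

variable {s : ℝ} {x : ℝ × ℝ}

/-- The three points of `Ω`, which are the vertices of the unit triangle. -/
def vertex : Fin 3 → ℝ × ℝ := ![(1, 0), (0, 1), (0, 0)]

/-- The barycentric coordinates, with sum `s`, of a point with respect to the triangle of size `s`
with vertices `s • vertex c`. Keeping the size as an argument makes them linear in `(s, x)`. -/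
def coord (s : ℝ) (c : Fin 3) (x : ℝ × ℝ) : ℝ := ![x.1, x.2, s - x.1 - x.2] c

theorem range_vertex : range vertex = OmegaR := by
  ext x
  simp [OmegaR, vertex, or_comm]

theorem coord_one_vertex (c c' : Fin 3) : coord 1 c (vertex c') = if c' = c then 1 else 0 := by
  fin_cases c <;> fin_cases c' <;> simp [coord, vertex]

theorem vertex_injective : Function.Injective vertex := fun c c' h ↦ by
  by_contra hne
  simpa [coord_one_vertex, Ne.symm hne] using congrArg (coord 1 c) h

theorem coord_add (s t : ℝ) (c : Fin 3) (x y : ℝ × ℝ) :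
    coord (s + t) c (x + y) = coord s c x + coord t c y := by
  fin_cases c
  exacts [rfl, rfl,
    (by ring : s + t - (x.1 + y.1) - (x.2 + y.2) = s - x.1 - x.2 + (t - y.1 - y.2))]

theorem coord_smul (r s : ℝ) (c : Fin 3) (x : ℝ × ℝ) :
    coord (r * s) c (r • x) = r * coord s c x := by
  fin_cases c
  exacts [rfl, rfl, (by ring : r * s - r * x.1 - r * x.2 = r * (s - x.1 - x.2))]

theorem hasSum_coord {f : ℕ → ℝ} {g : ℕ → ℝ × ℝ} (hf : HasSum f s) (hg : HasSum g x)
    (c : Fin 3) : HasSum (fun i ↦ coord (f i) c (g i)) (coord s c x) := by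
  have hfst : HasSum (fun i ↦ (g i).1) x.1 := hg.map (AddMonoidHom.fst ℝ ℝ) continuous_fst
  have hsnd : HasSum (fun i ↦ (g i).2) x.2 := hg.map (AddMonoidHom.snd ℝ ℝ) continuous_snd
  fin_cases c
  exacts [hfst, hsnd, (hf.sub hfst).sub hsnd]

/-- The triangle of size `s` with vertices `s • vertex c`, cut out by barycentric coordinates. -/
def triangle (s : ℝ) : Set (ℝ × ℝ) := {x | ∀ c, 0 ≤ coord s c x}

theorem convex_triangle (s : ℝ) : Convex ℝ (triangle s) := by
  intro x hx y hy a b ha hb hab c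
  rw [← one_mul s, ← hab, add_mul, coord_add, coord_smul, coord_smul]
  exact add_nonneg (mul_nonneg ha (hx c)) (mul_nonneg hb (hy c))

theorem sum_coord (s : ℝ) (x : ℝ × ℝ) : ∑ c, coord s c x = s := by
  simp only [coord, Fin.sum_univ_three, Matrix.cons_val]
  ring

theorem sum_coord_smul_vertex (s : ℝ) (x : ℝ × ℝ) : ∑ c, coord s c x • vertex c = x := by
  ext <;> simp [Fin.sum_univ_three, coord, vertex]

theorem triangle_subset_convexHull (hs : 0 < s) :
    triangle s ⊆ convexHull ℝ (range fun c ↦ s • vertex c) := by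
  intro x hx
  have hcomb : ∑ c, (s⁻¹ * coord s c x) • s • vertex c = x := by
    simp_rw [smul_smul, mul_right_comm, inv_mul_cancel₀ hs.ne', one_mul]
    exact sum_coord_smul_vertex s x
  rw [← hcomb]
  refine (convex_convexHull ℝ _).sum_mem (fun c _ ↦ mul_nonneg (by positivity) (hx c)) ?_
    fun c _ ↦ subset_convexHull ℝ _ (mem_range_self c)
  rw [← Finset.mul_sum, sum_coord, inv_mul_cancel₀ hs.ne']

end Barycentric

section Coding

variable {β γ : ℝ} {c : Fin 3} {w : ℕ → Fin 3}

/-- The 0-1 sequence marking the occurrences of the letter `c` in the word `w`. -/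
def letterIndicator (c : Fin 3) (w : ℕ → Fin 3) (i : ℕ) : ℕ := if w i = c then 1 else 0

/-- The value in base `β` of the occurrences of the letter `c` in the word `w`, which is the `c`-th
barycentric coordinate of the point coded by `w`. -/
def letterValue (β : ℝ) (c : Fin 3) (w : ℕ → Fin 3) : ℝ :=
  expansionValue β fun i ↦ (letterIndicator c w i : ℝ)

theorem isBinary_letterIndicator (c : Fin 3) (w : ℕ → Fin 3) : IsBinary (letterIndicator c w) :=
  fun i ↦ by
    rw [letterIndicator]
    split_ifs <;> simp

theorem letterValue_nonneg (hβ : 0 ≤ β) (c : Fin 3) (w : ℕ → Fin 3) : 0 ≤ letterValue β c w :=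
  expansionValue_nonneg hβ fun _ ↦ Nat.cast_nonneg _

theorem mul_letterValue (hβ : 1 < β) (c : Fin 3) (w : ℕ → Fin 3) :
    β * letterValue β c w = letterIndicator c w 0 + letterValue β c (fun i ↦ w (1 + i)) :=
  smul_expansionValue hβ (isBinary_letterIndicator c w).isBounded_range_cast

theorem letterValue_anti_base (hβ : 1 < β) (hβγ : β ≤ γ) (c : Fin 3) (w : ℕ → Fin 3) :
    letterValue γ c w ≤ letterValue β c w :=
  expansionValue_anti_base hβ hβγ (isBinary_letterIndicator c w).isBounded_range_cast
    fun _ ↦ Nat.cast_nonneg _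

theorem continuousAt_letterValue (hβ : 1 < β) (c : Fin 3) (w : ℕ → Fin 3) :
    ContinuousAt (fun γ ↦ letterValue γ c w) β :=
  continuousAt_expansionValue hβ (isBinary_letterIndicator c w).isBounded_range_cast

theorem letterValue_lt_inv_sub_one (hβ : 1 < β) {m : ℕ} (hm : w m ≠ c) :
    letterValue β c w < (β - 1)⁻¹ := by
  have hbin := isBinary_letterIndicator c w
  have hlt : letterValue β c w < expansionValue β fun _ ↦ (1 : ℝ) :=
    expansionValue_lt_expansionValue hβ hbin.isBounded_range_cast (by simp)
      (fun i ↦ mod_cast hbin i) (m := m) (by simp [letterIndicator, hm])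
  rwa [expansionValue_const hβ, smul_eq_mul, mul_one] at hlt

theorem isBounded_range_vertex_comp (w : ℕ → Fin 3) : IsBounded (range (vertex ∘ w)) :=
  (finite_range vertex).isBounded.subset (range_comp_subset_range w vertex)

theorem coord_expansionValue (hβ : 1 < β) (c : Fin 3) (w : ℕ → Fin 3) :
    coord (β - 1)⁻¹ c (expansionValue β (vertex ∘ w)) = letterValue β c w := by
  have hsum := hasSum_coord (hasSum_inv_pow_succ hβ)
    (hasSum_expansionValue hβ (isBounded_range_vertex_comp w)) c
  refine hsum.tsum_eq.symm.trans (tsum_congr fun i ↦ ?_)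
  nth_rw 1 [← mul_one (β ^ (i + 1))⁻¹]
  simp only [coord_smul, Function.comp_apply, coord_one_vertex, letterIndicator, Nat.cast_ite,
    Nat.cast_one, Nat.cast_zero, smul_eq_mul]

theorem mem_range_vertex_comp_iff {d : ℕ → ℝ × ℝ} :
    (∀ i, d i ∈ OmegaR) ↔ ∃ w : ℕ → Fin 3, vertex ∘ w = d := by
  simp_rw [← range_vertex, mem_range, Classical.skolem, funext_iff, Function.comp_apply]

theorem Sfat_eq_range (β : ℝ) : Sfat β = range fun w ↦ expansionValue β (vertex ∘ w) := by
  ext x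
  simp only [Sfat, mem_range_vertex_comp_iff, mem_ofPred_eq, mem_range, expansionValue]
  constructor
  · rintro ⟨_, ⟨w, rfl⟩, rfl⟩
    exact ⟨w, rfl⟩
  · rintro ⟨w, rfl⟩
    exact ⟨_, ⟨w, rfl⟩, rfl⟩

theorem Delta_eq_triangle (hβ : 1 < β) : Delta β = triangle (β - 1)⁻¹ := by
  rw [Delta, Sfat_eq_range]
  apply Subset.antisymm
  · refine convexHull_min (range_subset_iff.2 fun w c ↦ ?_) (convex_triangle _)
    rw [coord_expansionValue hβ]
    exact letterValue_nonneg (by positivity) c w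
  · refine (triangle_subset_convexHull (inv_pos.2 (sub_pos.2 hβ))).trans (convexHull_mono ?_)
    exact range_subset_iff.2 fun c ↦ ⟨fun _ ↦ c, expansionValue_const hβ (vertex c)⟩

theorem mul_coord_fmap (hβ : 1 < β) (c c' : Fin 3) (y : ℝ × ℝ) :
    β * coord (β - 1)⁻¹ c (fmap β (vertex c') y) =
      coord (β - 1)⁻¹ c y + if c' = c then 1 else 0 := by
  have hβ₀ : β ≠ 0 := by positivity
  have hsize : β * (β - 1)⁻¹ = (β - 1)⁻¹ + 1 := by
    field_simp [sub_ne_zero.2 hβ.ne']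
    ring
  rw [← coord_smul, fmap, smul_inv_smul₀ hβ₀, hsize, coord_add, coord_one_vertex]

theorem mem_image_fmap_iff (hβ : 1 < β) {x : ℝ × ℝ} (hx : x ∈ Delta β) (c : Fin 3) :
    x ∈ fmap β (vertex c) '' Delta β ↔ 1 ≤ β * coord (β - 1)⁻¹ c x := by
  have hβ₀ : β ≠ 0 := by positivity
  rw [Delta_eq_triangle hβ] at hx ⊢
  constructor
  · rintro ⟨y, hy, rfl⟩
    rw [mul_coord_fmap hβ, if_pos rfl]
    exact le_add_of_nonneg_left (hy c)
  · intro hc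
    have hinv : fmap β (vertex c) (β • x - vertex c) = x := by
      rw [fmap, sub_add_cancel, inv_smul_smul₀ hβ₀]
    refine ⟨β • x - vertex c, fun c' ↦ ?_, hinv⟩
    have hcoord := mul_coord_fmap hβ c' c (β • x - vertex c)
    rw [hinv] at hcoord
    split_ifs at hcoord with h
    · subst h
      linarith
    · have := mul_nonneg (zero_le_one.trans hβ.le) (hx c')
      linarith

theorem expansionValue_mem_image_fmap_iff (hβ : 1 < β) :
    expansionValue β (vertex ∘ w) ∈ fmap β (vertex c) '' Delta β ↔
      w 0 = c ∨ 1 ≤ letterValue β c (fun i ↦ w (1 + i)) := by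
  have hmem : expansionValue β (vertex ∘ w) ∈ Delta β :=
    subset_convexHull ℝ _ (Sfat_eq_range β ▸ mem_range_self w)
  rw [mem_image_fmap_iff hβ hmem, coord_expansionValue hβ, mul_letterValue hβ, letterIndicator]
  split_ifs with h
  · simp [h, letterValue_nonneg (zero_le_one.trans hβ.le)]
  · simp [h]

theorem expansionValue_mem_Ofat_iff (hβ : 1 < β) :
    expansionValue β (vertex ∘ w) ∈ Ofat β ↔
      ∃ c, w 0 ≠ c ∧ 1 ≤ letterValue β c (fun i ↦ w (1 + i)) := by
  simp only [Ofat, ← range_vertex, biUnion_range, mem_iUnion, mem_inter_iff,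
    expansionValue_mem_image_fmap_iff hβ, vertex_injective.ne_iff, exists_prop]
  constructor
  · rintro ⟨c, c', hne, hc, hc'⟩
    rcases eq_or_ne (w 0) c with rfl | h
    · exact ⟨c', hne, hc'.resolve_left hne⟩
    · exact ⟨c, h, hc.resolve_left h⟩
  · rintro ⟨c, hne, hc⟩
    exact ⟨w 0, c, hne, .inl rfl, .inr hc⟩

theorem vertex_comp_mem_Ufat_iff (hβ : 1 < β) :
    vertex ∘ w ∈ Ufat β ↔
      ∀ n c, w n ≠ c → letterValue β c (fun i ↦ w (n + 1 + i)) < 1 := by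
  have htail : ∀ n, (∑' i, (β ^ (i + 1))⁻¹ • (vertex ∘ w) (n + i)) ∉ Ofat β ↔
      ∀ c, w n ≠ c → letterValue β c (fun i ↦ w (n + 1 + i)) < 1 := fun n ↦ by
    have h := (expansionValue_mem_Ofat_iff (w := fun i ↦ w (n + i)) hβ).not
    push Not at h
    simpa only [expansionValue, Function.comp_apply, add_zero, ← add_assoc] using h
  rw [Ufat, mem_ofPred_eq, and_iff_right (mem_range_vertex_comp_iff.2 ⟨w, rfl⟩)]
  exact forall_congr' htail

theorem vertex_comp_mem_Ufat_of_le (hβ : 1 < β) (hβγ : β ≤ γ) (hw : vertex ∘ w ∈ Ufat β) :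
    vertex ∘ w ∈ Ufat γ := by
  rw [vertex_comp_mem_Ufat_iff (hβ.trans_le hβγ)]
  exact fun n c hn ↦
    (letterValue_anti_base hβ hβγ c _).trans_lt ((vertex_comp_mem_Ufat_iff hβ).1 hw n c hn)

theorem letterValue_le_one_of_frequently_mem_Ufat (hβ : 1 < β)
    (hw : ∃ᶠ γ in 𝓝 β, vertex ∘ w ∈ Ufat γ) {n : ℕ} (hn : w n ≠ c) :
    letterValue β c (fun i ↦ w (n + 1 + i)) ≤ 1 := by
  refine le_of_tendsto_of_frequently (continuousAt_letterValue hβ c _) ?_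
  refine (hw.and_eventually (lt_mem_nhds hβ)).mono fun γ ⟨hwγ, hγ⟩ ↦ ?_
  exact ((vertex_comp_mem_Ufat_iff hγ).1 hwγ n c hn).le

end Coding

section PeriodicWords

variable {β : ℝ} {w : ℕ → Fin 3} {k : ℕ}

theorem vertex_comp_mem_Ufat_iff_of_periodic (hβ : 1 < β) (hk : 0 < k)
    (hw : Function.Periodic w k) :
    vertex ∘ w ∈ Ufat β ↔
      ∀ n < k, ∀ c, w n ≠ c → letterValue β c (fun i ↦ w (n + 1 + i)) < 1 := by
  rw [vertex_comp_mem_Ufat_iff hβ]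
  refine ⟨fun h n _ ↦ h n, fun h n ↦ ?_⟩
  have hper : Function.Periodic
      (fun n ↦ ∀ c, w n ≠ c → letterValue β c (fun i ↦ w (n + 1 + i)) < 1) k := fun n ↦ by
    simp only [add_right_comm n k, add_right_comm (n + 1) k, hw _]
  rw [← hper.map_mod_nat n]
  exact h _ (Nat.mod_lt n hk)

theorem eventually_vertex_comp_mem_Ufat (hβ : 1 < β) (hk : 0 < k) (hw : Function.Periodic w k)
    (hwβ : vertex ∘ w ∈ Ufat β) : ∀ᶠ γ in 𝓝 β, vertex ∘ w ∈ Ufat γ := by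
  have hvalues : ∀ᶠ γ in 𝓝 β, ∀ n < k, ∀ c, w n ≠ c →
      letterValue γ c (fun i ↦ w (n + 1 + i)) < 1 := by
    simp only [← mem_Iio, eventually_all_finite (finite_Iio k), eventually_all]
    exact fun n _ c hn ↦ (continuousAt_letterValue hβ c _).eventually_lt_const
      ((vertex_comp_mem_Ufat_iff hβ).1 hwβ n c hn)
  filter_upwards [hvalues, lt_mem_nhds hβ] with γ hγ hγ₁
  exact (vertex_comp_mem_Ufat_iff_of_periodic hγ₁ hk hw).2 hγ

theorem vertex_comp_mem_Ufat_two (hk : 0 < k) (hw : Function.Periodic w k) :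
    vertex ∘ w ∈ Ufat 2 := by
  refine (vertex_comp_mem_Ufat_iff one_lt_two).2 fun n c hn ↦ ?_
  have hlast : w (n + 1 + (k - 1)) ≠ c := by
    rwa [add_assoc, Nat.add_sub_cancel' hk, hw n]
  exact (letterValue_lt_inv_sub_one (w := fun i ↦ w (n + 1 + i)) one_lt_two hlast).trans_eq
    (by norm_num)

theorem finite_setOf_periodic {α : Type*} [Finite α] (hk : 0 < k) :
    {f : ℕ → α | Function.Periodic f k}.Finite := by
  refine (finite_range fun (g : Fin k → α) (i : ℕ) ↦ g ⟨i % k, Nat.mod_lt i hk⟩).subset ?_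
  exact fun f hf ↦ ⟨fun i ↦ f i, funext fun i ↦ hf.map_mod_nat i⟩

theorem exists_smallestPeriod {α : Type*} [Nontrivial α] (hk : 0 < k) :
    ∃ f : ℕ → α, SmallestPeriod f k := by
  classical
  obtain ⟨x, y, hxy⟩ := exists_pair_ne α
  refine ⟨fun i ↦ if k ∣ i then x else y, hk, fun i ↦ by simp, fun j hj hjk ↦ ⟨0, ?_⟩⟩
  simp [Nat.not_dvd_of_pos_of_lt hj hjk, hxy.symm]

theorem SmallestPeriod.periodic {α : Type*} {f : ℕ → α} (hf : SmallestPeriod f k) :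
    Function.Periodic f k := hf.2.1

theorem smallestPeriod_comp_iff {α α' : Type*} {g : α → α'} (hg : Function.Injective g)
    {f : ℕ → α} : SmallestPeriod (g ∘ f) k ↔ SmallestPeriod f k := by
  simp only [SmallestPeriod, Function.comp_apply, hg.eq_iff, hg.ne_iff]

theorem two_mul_inv_pow_le_letterValue (hβ : 1 < β) (hk : 0 < k) (hw : Function.Periodic w k) :
    2 * (β ^ (k + 1))⁻¹ ≤ letterValue β (w 0) w := by
  have hterms := (summable_expansionValue hβ
    (isBinary_letterIndicator (w 0) w).isBounded_range_cast).sum_le_tsum {0, k}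
    fun i _ ↦ by positivity
  have hle : (β ^ (k + 1))⁻¹ ≤ (β ^ (0 + 1))⁻¹ := by
    gcongr
    exact hβ.le
  rw [Finset.sum_pair hk.ne] at hterms
  simp only [letterIndicator, hw.eq, if_true, Nat.cast_one, smul_eq_mul, mul_one] at hterms
  exact ((two_mul _).trans_le (by gcongr)).trans hterms

theorem two_lt_pow_of_smallestPeriod (hβ : 1 < β) (hk : 2 ≤ k) (hw : SmallestPeriod w k)
    (hwβ : vertex ∘ w ∈ Ufat β) : 2 < β ^ (k + 1) := by
  obtain ⟨n, hn⟩ := hw.2.2 1 one_pos hk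
  have hlt := (two_mul_inv_pow_le_letterValue hβ hw.1 (hw.periodic.const_add (n + 1))).trans_lt
    ((vertex_comp_mem_Ufat_iff hβ).1 hwβ n (w (n + 1)) hn.symm)
  rwa [← div_eq_mul_inv, div_lt_one (by positivity)] at hlt

end PeriodicWords

section CriticalBase

variable {β : ℝ} {k : ℕ}

/-- The bases in `(1, 2]` whose univoque set contains a sequence of smallest period `k`; the
critical base `β_k` is the infimum of this set. -/
def univoqueBases (k : ℕ) : Set ℝ :=
  {β | β ∈ Ioc (1 : ℝ) 2 ∧ ∃ d ∈ Ufat β, SmallestPeriod d k}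

theorem mem_univoqueBases_iff :
    β ∈ univoqueBases k ↔ β ∈ Ioc (1 : ℝ) 2 ∧
      ∃ w : ℕ → Fin 3, SmallestPeriod w k ∧ vertex ∘ w ∈ Ufat β := by
  refine and_congr_right fun _ ↦ ⟨?_, ?_⟩
  · rintro ⟨d, hd, hper⟩
    obtain ⟨w, rfl⟩ := mem_range_vertex_comp_iff.1 hd.1
    exact ⟨w, (smallestPeriod_comp_iff vertex_injective).1 hper, hd⟩
  · rintro ⟨w, hper, hw⟩
    exact ⟨_, hw, (smallestPeriod_comp_iff vertex_injective).2 hper⟩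

theorem two_mem_univoqueBases (hk : 0 < k) : 2 ∈ univoqueBases k := by
  obtain ⟨w, hw⟩ := exists_smallestPeriod (α := Fin 3) hk
  exact mem_univoqueBases_iff.2
    ⟨⟨one_lt_two, le_rfl⟩, w, hw, vertex_comp_mem_Ufat_two hk hw.periodic⟩

theorem univoqueBases_eq_Ioc (hk : 0 < k) : univoqueBases k = Ioc (betaK k) 2 := by
  refine eq_Ioc_csInf_of_no_least ⟨2, two_mem_univoqueBases hk⟩ ⟨1, fun β hβ ↦ hβ.1.1.le⟩
    (fun β hβ ↦ hβ.1.2) (fun β hβ γ hβγ hγ ↦ ?_) fun β hβ ↦ ?_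
  · obtain ⟨⟨hβ₁, -⟩, w, hw, hwβ⟩ := mem_univoqueBases_iff.1 hβ
    exact mem_univoqueBases_iff.2
      ⟨⟨hβ₁.trans_le hβγ, hγ⟩, w, hw, vertex_comp_mem_Ufat_of_le hβ₁ hβγ hwβ⟩
  · obtain ⟨⟨hβ₁, hβ₂⟩, w, hw, hwβ⟩ := mem_univoqueBases_iff.1 hβ
    have hnear := (eventually_vertex_comp_mem_Ufat hβ₁ hk hw.periodic hwβ).and (lt_mem_nhds hβ₁)
    obtain ⟨γ, ⟨hwγ, hγ⟩, hγβ⟩ :=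
      ((hnear.filter_mono nhdsWithin_le_nhds).and self_mem_nhdsWithin : ∀ᶠ γ in 𝓝[<] β, _).exists
    exact ⟨γ, mem_univoqueBases_iff.2 ⟨⟨hγ, (hγβ.trans_le hβ₂).le⟩, w, hw, hwγ⟩, hγβ⟩

theorem betaK_lt_two (hk : 0 < k) : betaK k < 2 :=
  (univoqueBases_eq_Ioc hk ▸ two_mem_univoqueBases hk : (2 : ℝ) ∈ Ioc (betaK k) 2).1

theorem one_lt_betaK (hk : 2 ≤ k) : 1 < betaK k := by
  have hroot : (1 : ℝ) < 2 ^ ((k + 1 : ℕ) : ℝ)⁻¹ := Real.one_lt_rpow one_lt_two (by positivity)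
  refine hroot.trans_le (le_csInf ⟨2, two_mem_univoqueBases (by lia)⟩ fun β hβ ↦ ?_)
  obtain ⟨⟨hβ₁, -⟩, w, hw, hwβ⟩ := mem_univoqueBases_iff.1 hβ
  rw [Real.rpow_inv_le_iff_of_pos (by norm_num) (by positivity) (by positivity),
    Real.rpow_natCast]
  exact (two_lt_pow_of_smallestPeriod hβ₁ hk hw hwβ).le

theorem exists_frequently_mem_Ufat_betaK (hk : 0 < k) :
    ∃ w : ℕ → Fin 3, SmallestPeriod w k ∧ ∃ᶠ γ in 𝓝[>] betaK k, vertex ∘ w ∈ Ufat γ := by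
  have hfin : {w : ℕ → Fin 3 | SmallestPeriod w k}.Finite :=
    (finite_setOf_periodic hk).subset fun w hw ↦ hw.periodic
  refine hfin.frequently_exists.1 (Eventually.frequently ?_)
  filter_upwards [Ioo_mem_nhdsGT (betaK_lt_two hk)] with γ hγ
  have hmem : γ ∈ univoqueBases k := univoqueBases_eq_Ioc hk ▸ ⟨hγ.1, hγ.2.le⟩
  exact (mem_univoqueBases_iff.1 hmem).2

theorem exists_letterValue_betaK_eq_one (hk : 2 ≤ k) :
    ∃ w : ℕ → Fin 3, Function.Periodic w k ∧
      (∀ n c, w n ≠ c → letterValue (betaK k) c (fun i ↦ w (n + 1 + i)) ≤ 1) ∧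
      ∃ n c, letterValue (betaK k) c (fun i ↦ w (n + 1 + i)) = 1 := by
  have hk₀ : 0 < k := by lia
  have hβ := one_lt_betaK hk
  obtain ⟨w, hw, hfreq⟩ := exists_frequently_mem_Ufat_betaK hk₀
  have hle : ∀ n c, w n ≠ c → letterValue (betaK k) c (fun i ↦ w (n + 1 + i)) ≤ 1 :=
    fun n c ↦ letterValue_le_one_of_frequently_mem_Ufat hβ (hfreq.filter_mono nhdsWithin_le_nhds)
  have hnot : vertex ∘ w ∉ Ufat (betaK k) := fun h ↦ by
    have hmem := mem_univoqueBases_iff.2 ⟨⟨hβ, (betaK_lt_two hk₀).le⟩, w, hw, h⟩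
    rw [univoqueBases_eq_Ioc hk₀] at hmem
    exact hmem.1.false
  rw [vertex_comp_mem_Ufat_iff hβ] at hnot
  push Not at hnot
  obtain ⟨n, c, hn, hge⟩ := hnot
  exact ⟨w, hw.periodic, hle, n, c, (hle n c hn).antisymm hge⟩

theorem exists_periodic_isQuasiGreedy_betaK (hk : 2 ≤ k) :
    ∃ a, IsQuasiGreedy (betaK k) a ∧ Function.Periodic a k := by
  obtain ⟨w, hw, hle, n, c, hone⟩ := exists_letterValue_betaK_eq_one hk
  set u : ℕ → Fin 3 := fun i ↦ w (n + 1 + i) with hu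
  have hper : Function.Periodic (letterIndicator c u) k :=
    (hw.const_add (n + 1)).comp fun x ↦ if x = c then 1 else 0
  obtain ⟨m, hm⟩ : ∃ m, letterIndicator c u m ≠ 0 := by
    by_contra! hzero
    simp [letterValue, expansionValue, hzero] at hone
  refine ⟨letterIndicator c u, isQuasiGreedy_of_expansionValue_tail_le_one (one_lt_betaK hk)
    (isBinary_letterIndicator c u) (notEndInZeros_of_periodic (by lia) hper hm)
    (sumsToOne_iff.2 hone) fun j hj ↦ ?_, hper⟩
  have huj : u j ≠ c := by simpa [letterIndicator] using hj
  simpa only [letterValue, letterIndicator, hu, add_assoc] using hle (n + 1 + j) c huj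

end CriticalBase

/-- (a) The set of bases β ∈ (1,2] for which 𝐔_β contains a sequence of
smallest period k is exactly (β_k, 2]; (b) for k ≥ 2 the quasi-greedy
β_k-expansion of 1 is periodic with period k. -/
theorem stmt15 (k : ℕ) (hk : 1 ≤ k) :
    ({β : ℝ | β ∈ Set.Ioc (1 : ℝ) 2 ∧
        ∃ d ∈ FatSierpinski.Ufat β, FatSierpinski.SmallestPeriod d k} =
      Set.Ioc (FatSierpinski.betaK k) 2) ∧
    (2 ≤ k → ∀ a : ℕ → ℕ, FatSierpinski.IsQuasiGreedy (FatSierpinski.betaK k) a →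
      ∀ i, a (i + k) = a i) := by
  refine ⟨univoqueBases_eq_Ioc hk, fun hk₂ a ha ↦ ?_⟩
  obtain ⟨b, hb, hper⟩ := exists_periodic_isQuasiGreedy_betaK hk₂
  rw [ha.unique hb]
  exact hper

end FatSierpinski
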